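/- arXiv:2509.10211 — 3 statements merged into one kernel-verified Lean document; each statement's English description precedes it below -/
import Mathlib

section
/- Let d ≥ 2 be an integer, p ∈ [1,∞), s ∈ (0,1), and let (X, μ) be a σ-finite measure space. There exists a constant C depending only on d, s and p such that for every jointly measurable F : X × ℝ^d → ℝ with ∫_X ∫_{ℝ^d} |F(ω,x)|^p dx dμ(ω) < ∞, writing N(z) := ∫_X ∫_{ℝ^d} |F(ω,x+z) − F(ω,x)|^p dx dμ(ω) for z ∈ ℝ^d, one has: sup_{ε>0} ε^{−sp} ∮_{S^{d−1}} N(ε ẑ) σ(dẑ) ≤ sup_{z≠0} |z|^{−sp} N(z) ≤ C · sup_{ε>0} ε^{−sp} ∮_{S^{d−1}} N(ε ẑ) σ(dẑ), where σ is the normalized surface measure on the unit sphere S^{d−1} ⊂ ℝ^d and ∮ denotes the average with respect to σ. -/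
open MeasureTheory
open scoped ENNReal

/-- The `p`-th power increment functional
`N(z) = ∫_X ∫_{ℝ^d} |F(ω,x+z) − F(ω,x)|^p dx dμ(ω)`. -/
noncomputable def incrementFunctional (d : ℕ) {X : Type} [MeasurableSpace X] (μ : Measure X)
    (p : ℝ) (F : X × EuclideanSpace ℝ (Fin d) → ℝ) (z : EuclideanSpace ℝ (Fin d)) : ℝ≥0∞ :=
  ∫⁻ ω, ∫⁻ x, ENNReal.ofReal (|F (ω, x + z) - F (ω, x)| ^ p) ∂volume ∂μ

open Set Metric Measure in
lemma polar_lint {E : Type*} [NormedAddCommGroup E] [NormedSpace ℝ E] [Nontrivial E]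
    [FiniteDimensional ℝ E] [MeasurableSpace E] [BorelSpace E] (μ : Measure E)
    [μ.IsAddHaarMeasure] (g : E → ℝ≥0∞) (hg : Measurable g) :
    ∫⁻ x, g x ∂μ = ∫⁻ r : Ioi (0:ℝ), ∫⁻ θ : sphere (0:E) 1, g (r.1 • θ.1) ∂μ.toSphere
      ∂(volumeIoiPow (Module.finrank ℝ E - 1)) := by
  have h1 : ∫⁻ x, g x ∂μ = ∫⁻ x : ({(0)}ᶜ : Set E), g x.1 ∂(μ.comap (↑)) := by
    rw [lintegral_subtype_comap (measurableSet_singleton _).compl g, restrict_compl_singleton]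
  have h2 := μ.measurePreserving_homeomorphUnitSphereProd.lintegral_comp_emb
        (Homeomorph.measurableEmbedding _)
        (fun q : sphere (0:E) 1 × Ioi (0:ℝ) => g (q.2.1 • q.1.1))
  have hm : Measurable (fun q : sphere (0:E) 1 × Ioi (0:ℝ) => g (q.2.1 • q.1.1)) :=
    hg.comp (by fun_prop)
  rw [h1, ← lintegral_prod_symm' _ hm, ← h2]
  refine lintegral_congr fun x => ?_
  congr 1
  have hx : ‖x.1‖ ≠ 0 := norm_ne_zero_iff.2 x.2
  simp [homeomorphUnitSphereProd, smul_smul, hx]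

open Set Metric Measure in
lemma ball_lint_le {E : Type*} [NormedAddCommGroup E] [NormedSpace ℝ E] [Nontrivial E]
    [FiniteDimensional ℝ E] [MeasurableSpace E] [BorelSpace E] (μ : Measure E)
    [μ.IsAddHaarMeasure] (g : E → ℝ≥0∞) (hg : Measurable g) (R : ℝ) (K : ℝ≥0∞)
    (h : ∀ r : ℝ, 0 < r → r < R →
      ∫⁻ θ : sphere (0:E) 1, g (r • θ.1) ∂μ.toSphere ≤ K * μ.toSphere univ) :
    ∫⁻ x in ball (0:E) R, g x ∂μ ≤ K * μ (ball (0:E) R) := by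
  rw [← setLIntegral_const, ← lintegral_indicator measurableSet_ball,
    ← lintegral_indicator measurableSet_ball, polar_lint μ _ (hg.indicator measurableSet_ball),
    polar_lint μ _ (measurable_const.indicator measurableSet_ball)]
  refine lintegral_mono fun r => ?_
  have hr : 0 < r.1 := r.2
  have hn : ∀ θ : sphere (0:E) 1, ‖r.1 • θ.1‖ = r.1 := fun θ => by
    have := θ.2
    simp [norm_smul, abs_of_pos hr]
  simp only [indicator, mem_ball_zero_iff, hn]
  split_ifs with hR
  · simpa using h r.1 hr hR
  · simp

section
variable {d : ℕ} {X : Type} [MeasurableSpace X] (μ : Measure X) [SigmaFinite μ] (p : ℝ)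
  (F : X × EuclideanSpace ℝ (Fin d) → ℝ)

lemma incr_measurable (hF : Measurable F) : Measurable (incrementFunctional d μ p F) := by
  unfold incrementFunctional
  have h : Measurable (fun q : (EuclideanSpace ℝ (Fin d) × X) × EuclideanSpace ℝ (Fin d) =>
      ENNReal.ofReal (|F (q.1.2, q.2 + q.1.1) - F (q.1.2, q.2)| ^ p)) := by
    have h1 : Measurable (fun q : (EuclideanSpace ℝ (Fin d) × X) × EuclideanSpace ℝ (Fin d) =>
      F (q.1.2, q.2 + q.1.1)) := hF.comp (by fun_prop)
    have h2 : Measurable (fun q : (EuclideanSpace ℝ (Fin d) × X) × EuclideanSpace ℝ (Fin d) =>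
      F (q.1.2, q.2)) := hF.comp (by fun_prop)
    have h3 := (h1.sub h2).norm
    simp only [Real.norm_eq_abs] at h3
    exact (h3.pow_const p).ennreal_ofReal
  exact (h.lintegral_prod_right').lintegral_prod_right'

lemma incr_le (hp : 1 ≤ p) (hF : Measurable F) (z w : EuclideanSpace ℝ (Fin d)) :
    incrementFunctional d μ p F z ≤ 2 ^ (p - 1) *
      (incrementFunctional d μ p F w + incrementFunctional d μ p F (z - w)) := by
  have hm : ∀ v : EuclideanSpace ℝ (Fin d), Measurable
      (fun q : X × EuclideanSpace ℝ (Fin d) =>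
        ENNReal.ofReal (|F (q.1, q.2 + v) - F (q.1, q.2)| ^ p)) := by
    intro v
    have h1 : Measurable (fun q : X × EuclideanSpace ℝ (Fin d) =>
      F (q.1, q.2 + v)) := hF.comp (by fun_prop)
    have h3 := (h1.sub hF).norm
    simp only [Real.norm_eq_abs] at h3
    exact (h3.pow_const p).ennreal_ofReal
  have hx : ∀ v ω, Measurable (fun x => ENNReal.ofReal (|F (ω, x + v) - F (ω, x)| ^ p)) :=
    fun v ω => (hm v).comp measurable_prodMk_left
  have hc : (2:ℝ≥0∞) ^ (p - 1) ≠ ⊤ :=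
    ENNReal.rpow_ne_top_of_nonneg (by linarith) (by simp)
  unfold incrementFunctional
  rw [← lintegral_add_left (hm w).lintegral_prod_right', ← lintegral_const_mul' _ _ hc]
  refine lintegral_mono fun ω => ?_
  dsimp only
  have hshift : ∫⁻ x, ENNReal.ofReal (|F (ω, x + (z - w)) - F (ω, x)| ^ p) =
      ∫⁻ x, ENNReal.ofReal (|F (ω, x + z) - F (ω, x + w)| ^ p) := by
    rw [← lintegral_add_right_eq_self _ w]
    refine lintegral_congr fun x => ?_
    rw [show x + w + (z - w) = x + z by abel]
  rw [hshift, ← lintegral_add_left (hx w ω), ← lintegral_const_mul' _ _ hc]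
  refine lintegral_mono fun x => ?_
  dsimp only
  have hp0 : 0 ≤ p := by linarith
  simp only [← ENNReal.ofReal_rpow_of_nonneg (abs_nonneg _) hp0]
  refine le_trans ?_ (ENNReal.rpow_add_le_mul_rpow_add_rpow _ _ hp)
  gcongr
  rw [← ENNReal.ofReal_add (abs_nonneg _) (abs_nonneg _)]
  apply ENNReal.ofReal_le_ofReal
  have := abs_add_le (F (ω, x + w) - F (ω, x)) (F (ω, x + z) - F (ω, x + w))
  rwa [show F (ω, x + w) - F (ω, x) + (F (ω, x + z) - F (ω, x + w)) =
    F (ω, x + z) - F (ω, x) by ring] at this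

open Metric in
lemma incr_ball (hp : 1 ≤ p) (hF : Measurable F) (z : EuclideanSpace ℝ (Fin d)) :
    incrementFunctional d μ p F z * volume (ball (0 : EuclideanSpace ℝ (Fin d)) ‖z‖) ≤
      2 ^ p * ∫⁻ w in ball (0 : EuclideanSpace ℝ (Fin d)) (2 * ‖z‖),
        incrementFunctional d μ p F w := by
  have hN := incr_measurable μ p F hF
  have hc : (2:ℝ≥0∞) ^ (p - 1) ≠ ⊤ :=
    ENNReal.rpow_ne_top_of_nonneg (by linarith) (by simp)
  have e1 : ∫⁻ w in ball (0 : EuclideanSpace ℝ (Fin d)) ‖z‖, incrementFunctional d μ p F w ≤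
      ∫⁻ w in ball (0 : EuclideanSpace ℝ (Fin d)) (2 * ‖z‖), incrementFunctional d μ p F w :=
    lintegral_mono_set (ball_subset_ball (by linarith [norm_nonneg z]))
  have e2 : ∫⁻ w in ball (0 : EuclideanSpace ℝ (Fin d)) ‖z‖,
        incrementFunctional d μ p F (z - w) ≤
      ∫⁻ w in ball (0 : EuclideanSpace ℝ (Fin d)) (2 * ‖z‖), incrementFunctional d μ p F w := by
    rw [← lintegral_indicator measurableSet_ball, ← lintegral_indicator measurableSet_ball,
      ← lintegral_sub_left_eq_self ((ball (0 : EuclideanSpace ℝ (Fin d)) (2 * ‖z‖)).indicator _) z]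
    refine lintegral_mono fun w => ?_
    by_cases hw : ‖w‖ < ‖z‖
    · have : ‖z - w‖ < 2 * ‖z‖ := by linarith [norm_sub_le z w]
      simp [Set.indicator, hw, this]
    · simp [Set.indicator, hw]
  have h2 : (2:ℝ≥0∞) ^ p = 2 ^ (p - 1) * 2 := by
    conv_rhs => rw [← ENNReal.rpow_one 2, ENNReal.rpow_one 2]
    nth_rewrite 3 [← ENNReal.rpow_one 2]
    rw [← ENNReal.rpow_add _ _ (by simp) (by simp)]
    simp
  rw [← setLIntegral_const]
  calc _ ≤ ∫⁻ w in ball (0 : EuclideanSpace ℝ (Fin d)) ‖z‖, 2 ^ (p - 1) *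
      (incrementFunctional d μ p F w + incrementFunctional d μ p F (z - w)) :=
        lintegral_mono fun w => incr_le μ p F hp hF z w
    _ ≤ _ := by
      rw [lintegral_const_mul' _ _ hc, lintegral_add_left hN, h2, mul_assoc, two_mul]
      gcongr
end

/-- Equivalence of the full Besov-type increment seminorm with the seminorm built from
spherical averages of increments: with `N(z)` as above and `σ` the normalized surface
measure on `S^{d−1}`,
`sup_{ε>0} ε^{−sp} ∮ N(ε zh) σ(dzh) ≤ sup_{z≠0} |z|^{−sp} N(z)
  ≤ C sup_{ε>0} ε^{−sp} ∮ N(ε zh) σ(dzh)` with `C = C(d,s,p)`. -/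
theorem besov_seminorm_spherical_equivalence (d : ℕ) (hd : 2 ≤ d) (p s : ℝ)
    (hp : 1 ≤ p) (hs : s ∈ Set.Ioo (0:ℝ) 1) :
    ∃ C : ℝ, 0 < C ∧
      ∀ (X : Type) (_ : MeasurableSpace X) (μ : Measure X), SigmaFinite μ →
      ∀ F : X × EuclideanSpace ℝ (Fin d) → ℝ, Measurable F →
      (∫⁻ ω, ∫⁻ x, ENNReal.ofReal (|F (ω, x)| ^ p) ∂volume ∂μ) < ⊤ →
      (⨆ (ε : ℝ) (_ : 0 < ε),
          ENNReal.ofReal (ε ^ (-(s*p))) *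
            ⨍⁻ zh, incrementFunctional d μ p F (ε • (zh : EuclideanSpace ℝ (Fin d)))
              ∂((volume : Measure (EuclideanSpace ℝ (Fin d))).toSphere)) ≤
        (⨆ (z : EuclideanSpace ℝ (Fin d)) (_ : z ≠ 0),
          ENNReal.ofReal (‖z‖ ^ (-(s*p))) * incrementFunctional d μ p F z) ∧
      (⨆ (z : EuclideanSpace ℝ (Fin d)) (_ : z ≠ 0),
          ENNReal.ofReal (‖z‖ ^ (-(s*p))) * incrementFunctional d μ p F z) ≤
        ENNReal.ofReal C *
          ⨆ (ε : ℝ) (_ : 0 < ε),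
            ENNReal.ofReal (ε ^ (-(s*p))) *
              ⨍⁻ zh, incrementFunctional d μ p F (ε • (zh : EuclideanSpace ℝ (Fin d)))
                ∂((volume : Measure (EuclideanSpace ℝ (Fin d))).toSphere) := by
  obtain ⟨hs0, hs1⟩ := hs
  have : NeZero d := ⟨by omega⟩
  have hp0 : 0 < p := by linarith
  have : Nontrivial (EuclideanSpace ℝ (Fin d)) :=
    Module.nontrivial_of_finrank_pos (R := ℝ) (by simp; omega)
  have hσ0 : (volume : Measure (EuclideanSpace ℝ (Fin d))).toSphere Set.univ ≠ 0 :=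
    Measure.measure_univ_ne_zero.2 (Measure.toSphere_ne_zero _)
  have hσt : (volume : Measure (EuclideanSpace ℝ (Fin d))).toSphere Set.univ ≠ ⊤ :=
    measure_ne_top _ _
  refine ⟨2 ^ p * 2 ^ (s * p) * 2 ^ d, by positivity, ?_⟩
  intro X _ μ hμ F hF _
  constructor
  · refine iSup₂_le fun ε hε => ?_
    rw [laverage_eq, ← mul_div_assoc, ← lintegral_const_mul' _ _ ENNReal.ofReal_ne_top]
    refine ENNReal.div_le_of_le_mul ?_
    rw [← lintegral_const]
    refine lintegral_mono fun θ => ?_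
    have hn : ‖ε • (θ : EuclideanSpace ℝ (Fin d))‖ = ε := by
      simp [norm_smul, abs_of_pos hε]
    have hz : ε • (θ : EuclideanSpace ℝ (Fin d)) ≠ 0 := by
      rw [← norm_ne_zero_iff, hn]; exact hε.ne'
    refine le_trans (le_of_eq ?_) (le_iSup₂ (ε • (θ : EuclideanSpace ℝ (Fin d))) hz)
    rw [hn]
  · set S := ⨆ (ε : ℝ) (_ : 0 < ε), ENNReal.ofReal (ε ^ (-(s*p))) *
              ⨍⁻ zh, incrementFunctional d μ p F (ε • (zh : EuclideanSpace ℝ (Fin d)))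
                ∂((volume : Measure (EuclideanSpace ℝ (Fin d))).toSphere) with hS
    refine iSup₂_le fun z hz => ?_
    have hz0 : 0 < ‖z‖ := norm_pos_iff.2 hz
    have hb := ball_lint_le (volume : Measure (EuclideanSpace ℝ (Fin d)))
      (incrementFunctional d μ p F) (incr_measurable μ p F hF) (2 * ‖z‖)
      (ENNReal.ofReal ((2 * ‖z‖) ^ (s * p)) * S) (by
        intro r hr hrR
        have h1 : ENNReal.ofReal (r ^ (-(s*p))) *
              ⨍⁻ zh, incrementFunctional d μ p F (r • (zh : EuclideanSpace ℝ (Fin d)))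
                ∂((volume : Measure (EuclideanSpace ℝ (Fin d))).toSphere) ≤ S :=
          le_iSup₂ (f := fun (ε : ℝ) (_ : 0 < ε) => ENNReal.ofReal (ε ^ (-(s*p))) *
              ⨍⁻ zh, incrementFunctional d μ p F (ε • (zh : EuclideanSpace ℝ (Fin d)))
                ∂((volume : Measure (EuclideanSpace ℝ (Fin d))).toSphere)) r hr
        rw [laverage_eq, ← mul_div_assoc, ENNReal.div_le_iff hσ0 hσt] at h1
        have h2 : ENNReal.ofReal (r ^ (s*p)) * ENNReal.ofReal (r ^ (-(s*p))) = 1 := by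
          rw [← ENNReal.ofReal_mul (by positivity), ← Real.rpow_add hr]
          simp
        calc _ = ENNReal.ofReal (r ^ (s*p)) * (ENNReal.ofReal (r ^ (-(s*p))) * _) := by
              rw [← mul_assoc, h2, one_mul]
          _ ≤ ENNReal.ofReal ((2 * ‖z‖) ^ (s * p)) * (S * _) := by gcongr
          _ = _ := by rw [mul_assoc])
    have hi := incr_ball μ p F hp hF z
    have hv : volume (Metric.ball (0 : EuclideanSpace ℝ (Fin d)) (2 * ‖z‖)) =
        ENNReal.ofReal (2 ^ d) * volume (Metric.ball (0 : EuclideanSpace ℝ (Fin d)) ‖z‖) := by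
      rw [Measure.addHaar_ball_mul_of_pos _ _ (by norm_num)]
      simp
    have hV0 : volume (Metric.ball (0 : EuclideanSpace ℝ (Fin d)) ‖z‖) ≠ 0 :=
      (Metric.measure_ball_pos _ _ hz0).ne'
    have hVt : volume (Metric.ball (0 : EuclideanSpace ℝ (Fin d)) ‖z‖) ≠ ⊤ :=
      measure_ball_lt_top.ne
    have h2p : (2:ℝ≥0∞) ^ p = ENNReal.ofReal (2 ^ p) := by
      rw [← ENNReal.ofReal_rpow_of_nonneg (by norm_num) hp0.le]
      simp
    rw [hv] at hb
    have hfin : incrementFunctional d μ p F z ≤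
        ENNReal.ofReal (2 ^ p) * (ENNReal.ofReal ((2 * ‖z‖) ^ (s * p)) * S *
          ENNReal.ofReal (2 ^ d)) := by
      rw [← ENNReal.mul_le_mul_iff_left hV0 hVt]
      refine hi.trans ?_
      rw [h2p, mul_assoc]
      gcongr
      rw [mul_assoc]
      exact hb
    calc _ ≤ ENNReal.ofReal (‖z‖ ^ (-(s*p))) * (ENNReal.ofReal (2 ^ p) *
          (ENNReal.ofReal ((2 * ‖z‖) ^ (s * p)) * S * ENNReal.ofReal (2 ^ d))) := by gcongr
      _ = ENNReal.ofReal (‖z‖ ^ (-(s*p))) * ENNReal.ofReal (2 ^ p) *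
          ENNReal.ofReal ((2 * ‖z‖) ^ (s * p)) * ENNReal.ofReal (2 ^ d) * S := by ring
      _ = _ := by
        rw [← ENNReal.ofReal_mul (by positivity), ← ENNReal.ofReal_mul (by positivity),
          ← ENNReal.ofReal_mul (by positivity)]
        congr 2
        rw [Real.mul_rpow (by norm_num) hz0.le, Real.rpow_neg hz0.le]
        field_simp
end

section
/- Let d ≥ 1 and let Ĉ : ℝ^d → ℝ^{d×d} be measurable with Ĉ(ξ) symmetric positive semidefinite for every ξ, ∫_{ℝ^d} ‖Ĉ(ξ)‖ dξ < ∞ and sup_{ξ} ‖Ĉ(ξ)‖ < ∞ (operator norm). Then for every ε > 0 and every γ > 0 there exists K = K(ε, γ, Ĉ) > 0 such that for every d-tuple g = (g₁,…,g_d) of finite signed Borel measures on ℝ^d, writing ĝ(ξ) := ∫_{ℝ^d} e^{−2πi⟨ξ,x⟩} dg(x) ∈ ℂ^d and ‖g‖_{TV} := Σ_j |g_j|(ℝ^d): ∫_{ℝ^d} Σ_{j,k} Ĉ_{jk}(ξ) ĝ_j(ξ) · conj(ĝ_k(ξ)) dξ ≤ ε ‖g‖²_{TV} + K ∫_{ℝ^d}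 (1+|ξ|²)^{−γ} |ĝ(ξ)|² dξ. -/
open MeasureTheory
open scoped ENNReal RealInnerProductSpace

/-- The Fourier transform of a `d`-tuple of finite signed measures, computed componentwise via
the Jordan decomposition. -/
noncomputable def signedFourier {d : ℕ}
    (g : Fin d → MeasureTheory.SignedMeasure (EuclideanSpace ℝ (Fin d)))
    (j : Fin d) (ξ : EuclideanSpace ℝ (Fin d)) : ℂ :=
  (∫ x, Complex.exp (-2 * Real.pi * Complex.I * ((⟪ξ, x⟫ : ℝ) : ℂ))
      ∂((g j).toJordanDecomposition.posPart)) -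
    ∫ x, Complex.exp (-2 * Real.pi * Complex.I * ((⟪ξ, x⟫ : ℝ) : ℂ))
      ∂((g j).toJordanDecomposition.negPart)

lemma aux_norm_signedFourier_le {d : ℕ}
    (g : Fin d → MeasureTheory.SignedMeasure (EuclideanSpace ℝ (Fin d)))
    (j : Fin d) (ξ : EuclideanSpace ℝ (Fin d)) :
    ‖signedFourier g j ξ‖ ≤ ((g j).totalVariation Set.univ).toReal := by
  have hn : ∀ x : EuclideanSpace ℝ (Fin d),
      ‖Complex.exp (-2 * Real.pi * Complex.I * ((⟪ξ, x⟫ : ℝ) : ℂ))‖ ≤ 1 := by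
    intro x
    rw [Complex.norm_exp]
    simp
  have h1 := norm_integral_le_of_norm_le_const
    (μ := (g j).toJordanDecomposition.posPart) (Filter.Eventually.of_forall hn)
  have h2 := norm_integral_le_of_norm_le_const
    (μ := (g j).toJordanDecomposition.negPart) (Filter.Eventually.of_forall hn)
  have h3 : ((g j).totalVariation Set.univ).toReal =
      (g j).toJordanDecomposition.posPart.real Set.univ +
      (g j).toJordanDecomposition.negPart.real Set.univ := by
    unfold SignedMeasure.totalVariation
    rw [Measure.add_apply, ENNReal.toReal_add (measure_ne_top _ _) (measure_ne_top _ _)]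
    rfl
  rw [h3]
  unfold signedFourier
  refine (norm_sub_le _ _).trans ?_
  linarith

lemma aux_tail {d : ℕ} (A : EuclideanSpace ℝ (Fin d) → ℝ) (hA : Integrable A volume)
    (ε : ℝ) (hε : 0 < ε) :
    ∃ R : ℝ, 0 ≤ R ∧
      ∫⁻ ξ in (Metric.closedBall (0 : EuclideanSpace ℝ (Fin d)) R)ᶜ, ENNReal.ofReal (A ξ)
        ≤ ENNReal.ofReal ε := by
  have hfin := isFiniteMeasure_withDensity_ofReal hA.2
  have ht := tendsto_measure_iInter_atTop
    (μ := (volume : Measure (EuclideanSpace ℝ (Fin d))).withDensity fun ξ => ENNReal.ofReal (A ξ))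
    (s := fun n : ℕ => (Metric.closedBall (0 : EuclideanSpace ℝ (Fin d)) (n : ℝ))ᶜ)
    (fun n => measurableSet_closedBall.compl.nullMeasurableSet)
    (fun m n hmn => Set.compl_subset_compl.2
      (Metric.closedBall_subset_closedBall (by exact_mod_cast hmn)))
    ⟨0, measure_ne_top _ _⟩
  have he : (⋂ n : ℕ, (Metric.closedBall (0 : EuclideanSpace ℝ (Fin d)) (n : ℝ))ᶜ) = ∅ := by
    rw [← Set.compl_iUnion, Metric.iUnion_closedBall_nat, Set.compl_univ]
  rw [he, measure_empty] at ht
  obtain ⟨n, hn⟩ := ((tendsto_order.1 ht).2 (ENNReal.ofReal ε)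
    (ENNReal.ofReal_pos.2 hε)).exists
  refine ⟨n, Nat.cast_nonneg n, ?_⟩
  rw [Function.comp_apply, withDensity_apply _ measurableSet_closedBall.compl] at hn
  exact hn.le

/-- Interpolation inequality for a matrix-valued spectral density `Ĉ` that is pointwise
symmetric positive semidefinite, integrable and bounded: for every `ε > 0` and `γ > 0` there
is `K > 0` such that for every tuple `g` of finite signed measures,
`∫ Σ_{j,k} Ĉ_{jk}(ξ) ĝ_j(ξ) conj(ĝ_k(ξ)) dξ ≤ ε ‖g‖²_{TV} + K ∫ (1+|ξ|²)^{−γ} |ĝ(ξ)|² dξ`. -/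
theorem spectral_density_interpolation (d : ℕ) (hd : 1 ≤ d)
    (Chat : EuclideanSpace ℝ (Fin d) → Matrix (Fin d) (Fin d) ℝ)
    (hmeas : ∀ i j, Measurable fun ξ => Chat ξ i j)
    (hpsd : ∀ ξ, (Chat ξ).PosSemidef)
    (hint : ∀ i j, Integrable (fun ξ => Chat ξ i j) volume)
    (hbdd : ∃ Kb : ℝ, ∀ ξ i j, |Chat ξ i j| ≤ Kb)
    (ε γ : ℝ) (hε : 0 < ε) (hγ : 0 < γ) :
    ∃ K : ℝ, 0 < K ∧
      ∀ g : Fin d → MeasureTheory.SignedMeasure (EuclideanSpace ℝ (Fin d)),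
        (∫⁻ ξ, ENNReal.ofReal
            (∑ j, ∑ k, Chat ξ j k *
              (signedFourier g j ξ * (starRingEnd ℂ) (signedFourier g k ξ)).re)) ≤
          ENNReal.ofReal
              (ε * (∑ j, ((g j).totalVariation Set.univ).toReal) ^ 2) +
            ENNReal.ofReal K *
              ∫⁻ ξ, ENNReal.ofReal
                ((1 + ‖ξ‖^2) ^ (-γ) * ∑ j, ‖signedFourier g j ξ‖ ^ 2) := by
  obtain ⟨Kb, hKb⟩ := hbdd
  set A : EuclideanSpace ℝ (Fin d) → ℝ := fun ξ => ∑ j, ∑ k, |Chat ξ j k| with hAdef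
  have hAint : Integrable A volume :=
    integrable_finsetSum _ fun j _ => integrable_finsetSum _ fun k _ => (hint j k).abs
  have hAmeas : Measurable A :=
    Finset.measurable_sum _ fun j _ => Finset.measurable_sum _ fun k _ => (hmeas j k).abs
  have hA0 : ∀ ξ, 0 ≤ A ξ := fun ξ =>
    Finset.sum_nonneg fun j _ => Finset.sum_nonneg fun k _ => abs_nonneg _
  obtain ⟨M, hM0, hM⟩ : ∃ M : ℝ, 0 < M ∧ ∀ ξ, A ξ ≤ M := by
    refine ⟨max 1 (∑ _j : Fin d, ∑ _k : Fin d, Kb), by positivity, fun ξ => ?_⟩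
    exact (Finset.sum_le_sum fun j _ => Finset.sum_le_sum fun k _ => hKb ξ j k).trans
      (le_max_right _ _)
  obtain ⟨R, hR0, hR⟩ := aux_tail A hAint ε hε
  refine ⟨M * (1 + R ^ 2) ^ γ, by positivity, fun g => ?_⟩
  set T : ℝ := ∑ j, ((g j).totalVariation Set.univ).toReal with hT
  set S : EuclideanSpace ℝ (Fin d) → ℝ := fun ξ => ∑ j, ‖signedFourier g j ξ‖ ^ 2 with hS
  have hS0 : ∀ ξ, 0 ≤ S ξ := fun ξ => Finset.sum_nonneg fun j _ => by positivity
  have hST : ∀ ξ, S ξ ≤ T ^ 2 := by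
    intro ξ
    refine (Finset.sum_le_sum fun j _ => pow_le_pow_left₀ (norm_nonneg _)
      (aux_norm_signedFourier_le g j ξ) 2).trans ?_
    exact Finset.sum_sq_le_sq_sum_of_nonneg fun j _ => ENNReal.toReal_nonneg
  have hquad : ∀ ξ, (∑ j, ∑ k, Chat ξ j k *
      (signedFourier g j ξ * (starRingEnd ℂ) (signedFourier g k ξ)).re) ≤ A ξ * S ξ := by
    intro ξ
    simp only [hAdef, Finset.sum_mul]
    refine Finset.sum_le_sum fun j _ => Finset.sum_le_sum fun k _ => ?_
    refine (le_abs_self _).trans ?_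
    rw [abs_mul]
    refine mul_le_mul_of_nonneg_left ?_ (abs_nonneg _)
    refine (Complex.abs_re_le_norm _).trans ?_
    rw [norm_mul, RCLike.norm_conj]
    have hj : ‖signedFourier g j ξ‖ ^ 2 ≤ S ξ :=
      Finset.single_le_sum (f := fun j => ‖signedFourier g j ξ‖ ^ 2)
        (fun j _ => by positivity) (Finset.mem_univ j)
    have hk : ‖signedFourier g k ξ‖ ^ 2 ≤ S ξ :=
      Finset.single_le_sum (f := fun j => ‖signedFourier g j ξ‖ ^ 2)
        (fun j _ => by positivity) (Finset.mem_univ k)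
    nlinarith [sq_nonneg (‖signedFourier g j ξ‖ - ‖signedFourier g k ξ‖)]
  set B : Set (EuclideanSpace ℝ (Fin d)) := (Metric.closedBall 0 R)ᶜ with hB
  have hBm : MeasurableSet B := measurableSet_closedBall.compl
  have hpt : ∀ ξ, ENNReal.ofReal (∑ j, ∑ k, Chat ξ j k *
      (signedFourier g j ξ * (starRingEnd ℂ) (signedFourier g k ξ)).re) ≤
      B.indicator (fun ξ => ENNReal.ofReal (A ξ)) ξ * ENNReal.ofReal (T ^ 2) +
      ENNReal.ofReal (M * (1 + R ^ 2) ^ γ) *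
        ENNReal.ofReal ((1 + ‖ξ‖ ^ 2) ^ (-γ) * S ξ) := by
    intro ξ
    by_cases hξ : ξ ∈ B
    · rw [Set.indicator_of_mem hξ, ← ENNReal.ofReal_mul (hA0 ξ)]
      refine le_add_right (ENNReal.ofReal_le_ofReal ((hquad ξ).trans ?_))
      exact mul_le_mul_of_nonneg_left (hST ξ) (hA0 ξ)
    · rw [← ENNReal.ofReal_mul (by positivity)]
      refine le_add_left (ENNReal.ofReal_le_ofReal ((hquad ξ).trans ?_))
      rw [← mul_assoc]
      refine mul_le_mul_of_nonneg_right ((hM ξ).trans ?_) (hS0 ξ)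
      have hξR : ‖ξ‖ ≤ R := by simpa [hB] using hξ
      have h1 : (1 + ‖ξ‖ ^ 2) ^ γ ≤ (1 + R ^ 2) ^ γ :=
        Real.rpow_le_rpow (by positivity) (by gcongr) hγ.le
      rw [mul_assoc]
      refine le_mul_of_one_le_right hM0.le ?_
      rw [Real.rpow_neg (by positivity), ← div_eq_mul_inv]
      exact (one_le_div (by positivity)).2 h1
  refine (lintegral_mono hpt).trans ?_
  rw [lintegral_add_left ((hAmeas.ennreal_ofReal.indicator hBm).mul_const _),
    lintegral_const_mul' _ _ ENNReal.ofReal_ne_top,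
    lintegral_mul_const' _ _ ENNReal.ofReal_ne_top, lintegral_indicator hBm,
    ENNReal.ofReal_mul hε.le]
  gcongr
end

section
/- For α ∈ (0,1) with α ≠ 1/2, define K₂(α) := (1−α) · cos(απ) · Γ(1−2α) · Γ(α+1/2) / Γ(α+1), where Γ denotes the real Gamma function. Then lim_{α→0⁺} K₂(α) = √π and lim_{α→1⁻} K₂(α) = √π / 4. -/
open Filter Real

lemma gamma_cont_pos {s : ℝ} (hs : 0 < s) : ContinuousAt Real.Gamma s := by
  refine (Real.differentiableAt_Gamma (fun m h => ?_)).continuousAt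
  have : (0:ℝ) ≤ m := Nat.cast_nonneg m
  linarith

lemma gamma_comp_cont {f : ℝ → ℝ} {a : ℝ} (hf : ContinuousAt f a) (h : 0 < f a) :
    ContinuousAt (fun x => Real.Gamma (f x)) a :=
  ContinuousAt.comp (g := Real.Gamma) (gamma_cont_pos h) hf



/-- Endpoint limits of the constant `K₂(α) = (1−α) cos(απ) Γ(1−2α) Γ(α+1/2)/Γ(α+1)` from the
Duchon–Robert-type formula of the incompressible Kraichnan model:
`K₂(α) → √π` as `α → 0⁺` and `K₂(α) → √π/4` as `α → 1⁻`. -/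
theorem kraichnan_constant_limits :
    Tendsto (fun α : ℝ =>
        (1 - α) * Real.cos (α * Real.pi) * Real.Gamma (1 - 2*α) * Real.Gamma (α + 1/2) /
          Real.Gamma (α + 1))
      (nhdsWithin 0 (Set.Ioi 0)) (nhds (Real.sqrt Real.pi)) ∧
    Tendsto (fun α : ℝ =>
        (1 - α) * Real.cos (α * Real.pi) * Real.Gamma (1 - 2*α) * Real.Gamma (α + 1/2) /
          Real.Gamma (α + 1))
      (nhdsWithin 1 (Set.Iio 1)) (nhds (Real.sqrt Real.pi / 4)) := by

  have c1 : ∀ a : ℝ, ContinuousAt (fun α : ℝ => Real.cos (α * Real.pi)) a := fun a => by fun_prop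
  constructor
  · have h1 : ContinuousAt (fun α : ℝ =>
        (1 - α) * Real.cos (α * Real.pi) * Real.Gamma (1 - 2*α) * Real.Gamma (α + 1/2) /
          Real.Gamma (α + 1)) 0 := by
      refine ContinuousAt.div (((ContinuousAt.mul (by fun_prop) (c1 0)).mul
        (gamma_comp_cont (by fun_prop) (by norm_num))).mul
        (gamma_comp_cont (by fun_prop) (by norm_num)))
        (gamma_comp_cont (by fun_prop) (by norm_num)) (by simp)
    have h2 := h1.tendsto
    norm_num [Real.Gamma_one] at h2
    rw [Real.Gamma_one_half_eq] at h2
    simpa using h2.mono_left nhdsWithin_le_nhds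
  · have h1 : ContinuousAt (fun α : ℝ =>
        Real.cos (α * Real.pi) * (Real.Gamma (3 - 2*α) / (2 * (1 - 2*α))) *
          Real.Gamma (α + 1/2) / Real.Gamma (α + 1)) 1 := by
      refine ContinuousAt.div (((c1 1).mul (ContinuousAt.div
        (gamma_comp_cont (by fun_prop) (by norm_num)) (by fun_prop) (by norm_num))).mul
        (gamma_comp_cont (by fun_prop) (by norm_num)))
        (gamma_comp_cont (by fun_prop) (by norm_num)) ?_
      exact (Real.Gamma_pos_of_pos (by norm_num)).ne'
    have h2 := h1.tendsto
    have e : Real.cos (1 * Real.pi) * (Real.Gamma (3 - 2*1) / (2 * (1 - 2*1))) *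
          Real.Gamma (1 + 1/2) / Real.Gamma (1 + 1) = Real.sqrt Real.pi / 4 := by
      rw [show (1:ℝ) + 1/2 = 1/2 + 1 by norm_num, Real.Gamma_add_one (by norm_num),
        Real.Gamma_one_half_eq, Real.Gamma_add_one (by norm_num),
        show (3:ℝ) - 2*1 = 1 by norm_num, Real.Gamma_one, one_mul, Real.cos_pi]
      ring
    rw [e] at h2
    refine (h2.mono_left nhdsWithin_le_nhds).congr' ?_
    have hm : Set.Ioo (1/2:ℝ) 1 ∈ nhdsWithin (1:ℝ) (Set.Iio 1) :=
      Ioo_mem_nhdsLT (by norm_num)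
    filter_upwards [hm] with α hα
    obtain ⟨ha, hb⟩ := hα
    have n1 : (1 - 2*α) ≠ 0 := by intro h; linarith
    have n2 : (1 - 2*α + 1) ≠ 0 := by intro h; linarith
    rw [show (3:ℝ) - 2*α = (1 - 2*α + 1) + 1 by ring, Real.Gamma_add_one n2,
      Real.Gamma_add_one n1]
    congr 2
    generalize Real.Gamma (1 - 2*α) = g
    generalize Real.cos (α * Real.pi) = c
    have hq : (1 - 2*α + 1) * ((1 - 2*α) * g) / (2 * (1 - 2*α)) = (1 - α) * g := by
      rw [div_eq_iff (mul_ne_zero two_ne_zero n1)]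
      ring
    rw [hq]
    ring
end
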